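/- arXiv:0911.3875 — 7 statements merged into one kernel-verified Lean document; each statement's English description precedes it below -/
import Mathlib

section
/- (Noncommutative root space Witt algebra.) Let K be the bilinear mapping on ℰ given on nonempty words by K(φ, ψ) = φ ˆ (D₁ ψ) − ψ ˆ (D₁ φ). Then K is antisymmetric, K(φ, ψ) = −K(ψ, φ), and for all words φ, ψ, χ over E each of tensor order at least 2 the Jacobi identity holds in ℰ: K(φ, K(ψ, χ)) + K(ψ, K(χ, φ)) + K(χ, K(φ, ψ)) = 0. -/
/-- The gluing (concatenation) operation on words over `E`:
`(xs ++ [a]) ˆ (b :: ys) = xs ++ [a * b] ++ ys`. -/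
def glue {E : Type*} [Mul E] : List E → List E → List E
  | [], ys => ys
  | [a], [] => [a]
  | [a], b :: ys => (a * b) :: ys
  | a :: b :: as, ys => a :: glue (b :: as) ys

/-- `applyAt f k w` applies `f` to the `k`-th (1-based) entry of the word `w`. -/
def applyAt {E : Type*} (f : E → E) : ℕ → List E → List E
  | _, [] => []
  | 0, w => w
  | 1, a :: as => f a :: as
  | k+2, a :: as => a :: applyAt f (k+1) as

/-- The basis element of the root space `ℰ` (the monoid algebra of the free
monoid on `E` over `ℂ`) corresponding to the word `w`, representing the
pure tensor `w₁ ⊗ ⋯ ⊗ w_N`. -/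
noncomputable def bw {E : Type*} (w : List E) : MonoidAlgebra ℂ (FreeMonoid E) :=
  MonoidAlgebra.single (FreeMonoid.ofList w) 1

/-!
On nonempty words `K` is the commutator of the product `φ ∘ ψ = φ ˆ (D₁ ψ)`. If `ψ` has at least
two letters, gluing a word to its right end does not touch its first letter, so
`D₁ (ψ ˆ χ) = (D₁ ψ) ˆ χ`; together with the associativity of `ˆ` this gives
`(φ ∘ ψ) ∘ χ = φ ∘ (ψ ∘ χ)`. The Jacobi identity is then that of the commutator of an associative
product.
-/

theorem glue_ne_nil {E : Type*} [Mul E] {φ : List E} (hφ : φ ≠ []) (ψ : List E) :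
    glue φ ψ ≠ [] := by
  match φ, ψ, hφ with
  | [_], [], _ | [_], _ :: _, _ | _ :: _ :: _, _, _ => simp [glue]

theorem glue_cons {E : Type*} [Mul E] (a : E) {φ : List E} (hφ : φ ≠ []) (ψ : List E) :
    glue (a :: φ) ψ = a :: glue φ ψ := by
  match φ, hφ with
  | _ :: _, _ => rfl

theorem glue_assoc {E : Type*} [Semigroup E] :
    ∀ φ ψ χ : List E, glue (glue φ ψ) χ = glue φ (glue ψ χ)
  | [], _, _ => rfl
  | [_], [], _ => rfl
  | [_], [_], [] => rfl
  | [a], [b], c :: χ => congrArg (· :: χ) (mul_assoc a b c)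
  | [_], _ :: _ :: _, _ => rfl
  | a :: b :: φ, ψ, χ => by
    have hne : b :: φ ≠ [] := List.cons_ne_nil b φ
    rw [glue_cons a hne, glue_cons a hne, glue_cons a (glue_ne_nil hne ψ), glue_assoc (b :: φ)]

theorem applyAt_one_glue {E : Type*} [Mul E] (f : E → E) {φ : List E} (hφ : 2 ≤ φ.length)
    (ψ : List E) : applyAt f 1 (glue φ ψ) = glue (applyAt f 1 φ) ψ := by
  match φ, hφ with
  | _ :: _ :: _, _ => rfl

/-- The product `φ ∘ ψ = φ ˆ (D₁ ψ)` on words, with an arbitrary map `f` in place of the derivative;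
the Witt bracket is its commutator. -/
def wittMul {E : Type*} [Mul E] (f : E → E) (φ ψ : List E) : List E :=
  glue φ (applyAt f 1 ψ)

theorem wittMul_ne_nil {E : Type*} [Mul E] (f : E → E) {φ : List E} (hφ : φ ≠ []) (ψ : List E) :
    wittMul f φ ψ ≠ [] :=
  glue_ne_nil hφ _

theorem wittMul_assoc {E : Type*} [Semigroup E] (f : E → E) (φ : List E) {ψ : List E}
    (hψ : 2 ≤ ψ.length) (χ : List E) :
    wittMul f (wittMul f φ ψ) χ = wittMul f φ (wittMul f ψ χ) := by
  simp only [wittMul, applyAt_one_glue f hψ, glue_assoc]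

theorem jacobi_of_commutator_wittMul {R V E : Type*} [CommSemiring R] [AddCommGroup V] [Module R V]
    [Semigroup E] {f : E → E} {e : List E → V} {K : V →ₗ[R] V →ₗ[R] V}
    (hK : ∀ φ ψ, φ ≠ [] → ψ ≠ [] → K (e φ) (e ψ) = e (wittMul f φ ψ) - e (wittMul f ψ φ))
    {φ ψ χ : List E} (hφ : 2 ≤ φ.length) (hψ : 2 ≤ ψ.length) (hχ : 2 ≤ χ.length) :
    K (e φ) (K (e ψ) (e χ)) + K (e ψ) (K (e χ) (e φ)) + K (e χ) (K (e φ) (e ψ)) = 0 := by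
  have double_bracket {α β γ : List E} (hα : α ≠ []) (hβ : β ≠ []) (hγ : γ ≠ []) :
      K (e α) (K (e β) (e γ)) =
        e (wittMul f α (wittMul f β γ)) - e (wittMul f (wittMul f β γ) α) -
          (e (wittMul f α (wittMul f γ β)) - e (wittMul f (wittMul f γ β) α)) := by
    rw [hK β γ hβ hγ, map_sub, hK α _ hα (wittMul_ne_nil f hβ γ),
      hK α _ hα (wittMul_ne_nil f hγ β)]
  have ne_nil {α : List E} (hα : 2 ≤ α.length) : α ≠ [] :=
    List.ne_nil_of_length_pos (by lia)
  rw [double_bracket (ne_nil hφ) (ne_nil hψ) (ne_nil hχ),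
    double_bracket (ne_nil hψ) (ne_nil hχ) (ne_nil hφ),
    double_bracket (ne_nil hχ) (ne_nil hφ) (ne_nil hψ)]
  simp only [wittMul_assoc f _ hφ, wittMul_assoc f _ hψ, wittMul_assoc f _ hχ]
  abel

theorem apply_eq_neg_swap_of_single {R M V : Type*} [CommSemiring R] [AddCommGroup V] [Module R V]
    {K : MonoidAlgebra R M →ₗ[R] MonoidAlgebra R M →ₗ[R] V}
    (hK : ∀ a b, K (.single a 1) (.single b 1) = -K (.single b 1) (.single a 1))
    (x y : MonoidAlgebra R M) : K x y = -K y x := by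
  suffices K = -K.flip from LinearMap.congr_fun₂ this x y
  ext a b
  simpa using hK a b

/-- The basis element of the word `w` in the root space with coefficients in `R`; over `ℂ` it is
`bw w` by definition. -/
noncomputable def basisWord (R : Type*) {E : Type*} [Semiring R] (w : List E) :
    MonoidAlgebra R (FreeMonoid E) :=
  MonoidAlgebra.single (FreeMonoid.ofList w) 1

theorem ncrs_witt_general {R E : Type*} [CommRing R] [Semigroup E] (f : E → E)
    (K : MonoidAlgebra R (FreeMonoid E) →ₗ[R]
      MonoidAlgebra R (FreeMonoid E) →ₗ[R] MonoidAlgebra R (FreeMonoid E))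
    (hK : ∀ φ ψ : List E, φ ≠ [] → ψ ≠ [] →
      K (basisWord R φ) (basisWord R ψ) =
        basisWord R (glue φ (applyAt f 1 ψ)) - basisWord R (glue ψ (applyAt f 1 φ)))
    (hKz : ∀ x, K (basisWord R []) x = 0 ∧ K x (basisWord R []) = 0) :
    (∀ x y, K x y = -K y x) ∧
    (∀ φ ψ χ : List E, 2 ≤ φ.length → 2 ≤ ψ.length → 2 ≤ χ.length →
      K (basisWord R φ) (K (basisWord R ψ) (basisWord R χ)) +
        K (basisWord R ψ) (K (basisWord R χ) (basisWord R φ)) +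
        K (basisWord R χ) (K (basisWord R φ) (basisWord R ψ)) = 0) := by
  have antisymm_words (φ ψ : List E) :
      K (basisWord R φ) (basisWord R ψ) = -K (basisWord R ψ) (basisWord R φ) := by
    rcases eq_or_ne φ [] with rfl | hφ
    · rw [(hKz _).1, (hKz _).2, neg_zero]
    rcases eq_or_ne ψ [] with rfl | hψ
    · rw [(hKz _).1, (hKz _).2, neg_zero]
    rw [hK φ ψ hφ hψ, hK ψ φ hψ hφ, neg_sub]
  exact ⟨apply_eq_neg_swap_of_single fun a b => antisymm_words a.toList b.toList,
    fun _ _ _ => jacobi_of_commutator_wittMul hK⟩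

/-- the noncommutative root space Witt continual Lie algebra.
`K` is the `ℂ`-bilinear map on `ℰ` given on nonempty basis words by
`K(φ, ψ) = φ ˆ (D₁ ψ) − ψ ˆ (D₁ φ)`, vanishing when an argument is the empty
word. Then `K` is antisymmetric, and for words of tensor order at least `2`
the Jacobi identity holds. -/
theorem ncrs_witt
    (E : Type*) [Ring E] [Algebra ℂ E] (d : E →ₗ[ℂ] E)
    (K : MonoidAlgebra ℂ (FreeMonoid E) →ₗ[ℂ]
         MonoidAlgebra ℂ (FreeMonoid E) →ₗ[ℂ] MonoidAlgebra ℂ (FreeMonoid E))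
    (hK : ∀ φ ψ : List E, φ ≠ [] → ψ ≠ [] →
      K (bw φ) (bw ψ) =
        bw (glue φ (applyAt (⇑d) 1 ψ)) - bw (glue ψ (applyAt (⇑d) 1 φ)))
    (hKz : ∀ x, K (bw ([] : List E)) x = 0 ∧ K x (bw ([] : List E)) = 0) :
    (∀ x y, K x y = - K y x) ∧
    (∀ φ ψ χ : List E, 2 ≤ φ.length → 2 ≤ ψ.length → 2 ≤ χ.length →
      K (bw φ) (K (bw ψ) (bw χ)) + K (bw ψ) (K (bw χ) (bw φ)) +
        K (bw χ) (K (bw φ) (bw ψ)) = 0) :=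
  ncrs_witt_general d K hK hKz
end

section
/- (Noncommutative root space Ricci flow algebra, identity (7).) Define bilinear mappings on ℰ by K₊(φ, ψ) = φ ⊗ ψ, K₋(φ, ψ) = −ψ ⊗ φ, K₀₀(φ, ψ) = φ ⊗ ψ − ψ ⊗ φ, and K₀(φ, ψ) = D_{ord φ}(φ ˆ ψ) on nonempty words. Then for all nonempty words φ, ψ, χ over E: K₀₀(ψ, K₀(φ, χ)) = K₀(K₊(ψ, φ), χ) + K₀(φ, K₋(ψ, χ)) in ℰ. -/
/-!
The identity on words comes down to two facts about `K₀(φ, χ) = D_{ord φ}(φ ˆ χ)`: only the last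
entry of `φ` and the first entry of `χ` are altered, so `K₀` commutes with prepending a word to `φ`
and with appending a word to `χ`. Hence `K₀(ψ ⊗ φ, χ) = ψ ⊗ K₀(φ, χ)` and
`K₀(φ, χ ⊗ ψ) = K₀(φ, χ) ⊗ ψ`, and the difference of the two is `K₀₀(ψ, K₀(φ, χ))`.
-/

section ApplyAt

variable {E : Type*} (f : E → E)

theorem length_applyAt (k : ℕ) (w : List E) : (applyAt f k w).length = w.length := by
  fun_induction applyAt f k w <;> simp_all

theorem applyAt_length_add_append {k : ℕ} (hk : k ≠ 0) (v w : List E) :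
    applyAt f (v.length + k) (v ++ w) = v ++ applyAt f k w := by
  obtain ⟨m, rfl⟩ := Nat.exists_eq_succ_of_ne_zero hk
  induction v with
  | nil => simp
  | cons a v ih =>
    rw [List.length_cons, Nat.succ_add_eq_add_succ]
    exact congrArg (a :: ·) ih

theorem applyAt_append_of_le_length {k : ℕ} {w : List E} (hk : k ≤ w.length) (v : List E) :
    applyAt f k (w ++ v) = applyAt f k w ++ v := by
  fun_induction applyAt f k w with
  | case1 k =>
    obtain rfl : k = 0 := by simpa using hk
    cases v <;> rfl
  | case2 w hw => cases w <;> simp_all [applyAt]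
  | case3 a as => rfl
  | case4 k a as ih => exact congrArg (a :: ·) (ih (by simpa using hk))

end ApplyAt

section Glue

variable {E : Type*} [Mul E]

theorem glue_append_left {φ : List E} (hφ : φ ≠ []) (ψ χ : List E) :
    glue (ψ ++ φ) χ = ψ ++ glue φ χ := by
  induction ψ with
  | nil => rfl
  | cons a ψ ih =>
    obtain ⟨b, w, hw⟩ := List.exists_cons_of_ne_nil (List.append_ne_nil_of_right_ne_nil ψ hφ)
    rw [hw] at ih
    rw [List.cons_append, hw, glue, ih, List.cons_append]

theorem glue_append_right {χ : List E} (hχ : χ ≠ []) (φ ψ : List E) :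
    glue φ (χ ++ ψ) = glue φ χ ++ ψ := by
  fun_induction glue φ χ <;> simp_all [glue]

theorem length_le_length_glue (φ χ : List E) : φ.length ≤ (glue φ χ).length := by
  fun_induction glue φ χ <;> simp_all

theorem applyAt_length_glue_ne_nil (f : E → E) {φ : List E} (hφ : φ ≠ []) (χ : List E) :
    applyAt f φ.length (glue φ χ) ≠ [] := by
  rw [← List.length_pos_iff, length_applyAt]
  exact (List.length_pos_iff.2 hφ).trans_le (length_le_length_glue φ χ)

theorem applyAt_length_glue_append_left (f : E → E) {φ : List E} (hφ : φ ≠ []) (ψ χ : List E) :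
    applyAt f (ψ ++ φ).length (glue (ψ ++ φ) χ) = ψ ++ applyAt f φ.length (glue φ χ) := by
  rw [glue_append_left hφ, List.length_append,
    applyAt_length_add_append f (List.length_pos_iff.2 hφ).ne']

theorem applyAt_length_glue_append_right (f : E → E) {χ : List E} (hχ : χ ≠ []) (φ ψ : List E) :
    applyAt f φ.length (glue φ (χ ++ ψ)) = applyAt f φ.length (glue φ χ) ++ ψ := by
  rw [glue_append_right hχ, applyAt_append_of_le_length f (length_le_length_glue φ χ)]

end Glue

theorem ncrs_ricci_flow_7_general {E : Type*} [Mul E] (d : E → E)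
    (Kp Km K00 K0 : MonoidAlgebra ℂ (FreeMonoid E) →ₗ[ℂ]
         MonoidAlgebra ℂ (FreeMonoid E) →ₗ[ℂ] MonoidAlgebra ℂ (FreeMonoid E))
    (hp : ∀ φ ψ : List E, φ ≠ [] → ψ ≠ [] → Kp (bw φ) (bw ψ) = bw (φ ++ ψ))
    (hm : ∀ φ ψ : List E, φ ≠ [] → ψ ≠ [] → Km (bw φ) (bw ψ) = -bw (ψ ++ φ))
    (h00 : ∀ φ ψ : List E, φ ≠ [] → ψ ≠ [] →
      K00 (bw φ) (bw ψ) = bw (φ ++ ψ) - bw (ψ ++ φ))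
    (h0 : ∀ φ ψ : List E, φ ≠ [] → ψ ≠ [] →
      K0 (bw φ) (bw ψ) = bw (applyAt d φ.length (glue φ ψ)))
    {φ ψ χ : List E} (hφ : φ ≠ []) (hψ : ψ ≠ []) (hχ : χ ≠ []) :
    K00 (bw ψ) (K0 (bw φ) (bw χ)) =
      K0 (Kp (bw ψ) (bw φ)) (bw χ) + K0 (bw φ) (Km (bw ψ) (bw χ)) := by
  have K0_prepend : K0 (Kp (bw ψ) (bw φ)) (bw χ) =
      bw (ψ ++ applyAt d φ.length (glue φ χ)) := by
    rw [hp ψ φ hψ hφ, h0 _ χ (List.append_ne_nil_of_right_ne_nil ψ hφ) hχ,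
      applyAt_length_glue_append_left d hφ]
  have K0_append : K0 (bw φ) (Km (bw ψ) (bw χ)) =
      -bw (applyAt d φ.length (glue φ χ) ++ ψ) := by
    rw [hm ψ χ hψ hχ, map_neg, h0 φ _ hφ (List.append_ne_nil_of_left_ne_nil hχ ψ),
      applyAt_length_glue_append_right d hχ]
  rw [K0_prepend, K0_append, ← sub_eq_add_neg, h0 φ χ hφ hχ,
    h00 ψ _ hψ (applyAt_length_glue_ne_nil d hφ χ)]

/-- the noncommutative root space Ricci flow continual Lie
algebra, identity (7), with `K₀(φ, ψ) = D_{ord φ}(φ ˆ ψ)` on nonempty words. -/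
theorem ncrs_ricci_flow_7
    (E : Type*) [Ring E] [Algebra ℂ E] (d : E →ₗ[ℂ] E)
    (Kp Km K00 K0 : MonoidAlgebra ℂ (FreeMonoid E) →ₗ[ℂ]
         MonoidAlgebra ℂ (FreeMonoid E) →ₗ[ℂ] MonoidAlgebra ℂ (FreeMonoid E))
    (hp : ∀ φ ψ : List E, φ ≠ [] → ψ ≠ [] → Kp (bw φ) (bw ψ) = bw (φ ++ ψ))
    (hm : ∀ φ ψ : List E, φ ≠ [] → ψ ≠ [] → Km (bw φ) (bw ψ) = -bw (ψ ++ φ))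
    (h00 : ∀ φ ψ : List E, φ ≠ [] → ψ ≠ [] →
      K00 (bw φ) (bw ψ) = bw (φ ++ ψ) - bw (ψ ++ φ))
    (h0 : ∀ φ ψ : List E, φ ≠ [] → ψ ≠ [] →
      K0 (bw φ) (bw ψ) = bw (applyAt (⇑d) φ.length (glue φ ψ)))
    (hz : ∀ x, Kp (bw ([] : List E)) x = 0 ∧ Kp x (bw ([] : List E)) = 0 ∧
               Km (bw ([] : List E)) x = 0 ∧ Km x (bw ([] : List E)) = 0 ∧
               K00 (bw ([] : List E)) x = 0 ∧ K00 x (bw ([] : List E)) = 0 ∧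
               K0 (bw ([] : List E)) x = 0 ∧ K0 x (bw ([] : List E)) = 0) :
    ∀ φ ψ χ : List E, φ ≠ [] → ψ ≠ [] → χ ≠ [] →
      K00 (bw ψ) (K0 (bw φ) (bw χ)) =
        K0 (Kp (bw ψ) (bw φ)) (bw χ) + K0 (bw φ) (Km (bw ψ) (bw χ)) := by
  intro φ ψ χ hφ hψ hχ
  exact ncrs_ricci_flow_7_general d Kp Km K00 K0 hp hm h00 h0 hφ hψ hχ
end

section
/- (Noncommutative root space Poisson bracket algebra, identity (6).) Define bilinear mappings on ℰ by K₊(φ, ψ) = −i·(∂^{⊗ord} φ) ⊗ ψ, K₋(φ, ψ) = i·ψ ⊗ (∂^{⊗ord} φ), and K₀₀(φ, ψ) = −i·(φ ⊗ ψ − ψ ⊗ φ) on nonempty words, where i is the imaginary unit of ℂ. Then for all nonempty words φ, ψ, χ over E: K₊(K₀₀(φ, ψ), χ) = K₊(φ, K₊(ψ, χ)) − K₊(ψ, K₊(φ, χ)), and the same identity with K₊ replaced by K₋. -/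
/-! In any associative algebra left multiplications satisfy `L_{[x, y]} = [L_x, L_y]`, and right
multiplications satisfy the same law up to a sign. Hence `φ ↦ c L_{∂φ}` and `φ ↦ -c R_{∂φ}` both
turn the bracket `c [φ, ψ]` into a commutator of operators, as soon as `∂` is multiplicative. Since
`∂^{⊗ord}` acts letter by letter, it is an endomorphism of the semigroup of nonempty words. -/

section Semigroup

variable {R V S : Type*} [CommRing R] [AddCommGroup V] [Module R V] [Semigroup S]

theorem apply_bracket_eq_commutator_of_left_mul {c : R} {b : S → V} (D : S →ₙ* S)
    {L B : V →ₗ[R] V →ₗ[R] V}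
    (hL : ∀ s t, L (b s) (b t) = c • b (D s * t))
    (hB : ∀ s t, B (b s) (b t) = c • (b (s * t) - b (t * s))) (s t u : S) :
    L (B (b s) (b t)) (b u) = L (b s) (L (b t) (b u)) - L (b t) (L (b s) (b u)) := by
  have left_mul_mul (s t : S) : c • L (b (s * t)) (b u) = L (b s) (L (b t) (b u)) := by
    simp only [hL, map_smul, map_mul, mul_assoc]
  calc L (B (b s) (b t)) (b u)
      = c • L (b (s * t)) (b u) - c • L (b (t * s)) (b u) := by
        simp only [hB, map_smul, map_sub, LinearMap.smul_apply, LinearMap.sub_apply, smul_sub]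
    _ = L (b s) (L (b t) (b u)) - L (b t) (L (b s) (b u)) := by
        rw [left_mul_mul, left_mul_mul]

-- Right multiplication is left multiplication in `Sᵐᵒᵖ`, where the bracket changes sign.
theorem apply_bracket_eq_commutator_of_right_mul {c : R} {b : S → V} (D : S →ₙ* S)
    {L B : V →ₗ[R] V →ₗ[R] V}
    (hL : ∀ s t, L (b s) (b t) = c • b (t * D s))
    (hB : ∀ s t, B (b s) (b t) = (-c) • (b (s * t) - b (t * s))) (s t u : S) :
    L (B (b s) (b t)) (b u) = L (b s) (L (b t) (b u)) - L (b t) (L (b s) (b u)) := by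
  have hB_op (s t : S) : B (b s) (b t) = c • (b (t * s) - b (s * t)) := by
    rw [hB, neg_smul, ← smul_neg, neg_sub]
  exact apply_bracket_eq_commutator_of_left_mul (b := b ∘ MulOpposite.unop) (MulHom.op D)
    (fun s t => hL s.unop t.unop) (fun s t => hB_op s.unop t.unop)
    (MulOpposite.op s) (MulOpposite.op t) (MulOpposite.op u)

end Semigroup

section Words

variable {E : Type*}

/-- The list of letters of a nonempty word; nonempty words under concatenation are modelled by
Mathlib's `FreeSemigroup`. -/
def wordLetters (w : FreeSemigroup E) : List E :=
  w.head :: w.tail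

theorem wordLetters_ne_nil (w : FreeSemigroup E) : wordLetters w ≠ [] :=
  List.cons_ne_nil _ _

theorem exists_wordLetters_eq {l : List E} (hl : l ≠ []) : ∃ w, wordLetters w = l :=
  ⟨⟨l.head hl, l.tail⟩, List.cons_head_tail hl⟩

theorem wordLetters_mul (v w : FreeSemigroup E) :
    wordLetters (v * w) = wordLetters v ++ wordLetters w :=
  rfl

theorem wordLetters_map {F : Type*} (d : E → F) (w : FreeSemigroup E) :
    wordLetters (FreeSemigroup.map d w) = (wordLetters w).map d := by
  induction w using FreeSemigroup.recOnMul with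
  | ih1 x => rfl
  | ih2 x w hx hw => simp only [map_mul, wordLetters_mul, List.map_append, hx, hw]

end Words

theorem ncrs_poisson_6_general {E : Type*} (d : E → E) (c : ℂ)
    (Kp Km K00 : MonoidAlgebra ℂ (FreeMonoid E) →ₗ[ℂ]
      MonoidAlgebra ℂ (FreeMonoid E) →ₗ[ℂ] MonoidAlgebra ℂ (FreeMonoid E))
    (hp : ∀ φ ψ : List E, φ ≠ [] → ψ ≠ [] → Kp (bw φ) (bw ψ) = (-c) • bw (φ.map d ++ ψ))
    (hm : ∀ φ ψ : List E, φ ≠ [] → ψ ≠ [] → Km (bw φ) (bw ψ) = c • bw (ψ ++ φ.map d))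
    (h00 : ∀ φ ψ : List E, φ ≠ [] → ψ ≠ [] →
      K00 (bw φ) (bw ψ) = (-c) • (bw (φ ++ ψ) - bw (ψ ++ φ))) :
    ∀ φ ψ χ : List E, φ ≠ [] → ψ ≠ [] → χ ≠ [] →
      Kp (K00 (bw φ) (bw ψ)) (bw χ) =
        Kp (bw φ) (Kp (bw ψ) (bw χ)) - Kp (bw ψ) (Kp (bw φ) (bw χ)) ∧
      Km (K00 (bw φ) (bw ψ)) (bw χ) =
        Km (bw φ) (Km (bw ψ) (bw χ)) - Km (bw ψ) (Km (bw φ) (bw χ)) := by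
  intro φ ψ χ hφ hψ hχ
  obtain ⟨u, rfl⟩ := exists_wordLetters_eq hφ
  obtain ⟨v, rfl⟩ := exists_wordLetters_eq hψ
  obtain ⟨w, rfl⟩ := exists_wordLetters_eq hχ
  let b (w : FreeSemigroup E) : MonoidAlgebra ℂ (FreeMonoid E) := bw (wordLetters w)
  have hp_word (s t) : Kp (b s) (b t) = (-c) • b (FreeSemigroup.map d s * t) := by
    simp only [b, wordLetters_mul, wordLetters_map,
      hp _ _ (wordLetters_ne_nil s) (wordLetters_ne_nil t)]
  have hm_word (s t) : Km (b s) (b t) = c • b (t * FreeSemigroup.map d s) := by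
    simp only [b, wordLetters_mul, wordLetters_map,
      hm _ _ (wordLetters_ne_nil s) (wordLetters_ne_nil t)]
  have h00_word (s t) : K00 (b s) (b t) = (-c) • (b (s * t) - b (t * s)) :=
    h00 _ _ (wordLetters_ne_nil s) (wordLetters_ne_nil t)
  exact ⟨apply_bracket_eq_commutator_of_left_mul _ hp_word h00_word u v w,
    apply_bracket_eq_commutator_of_right_mul _ hm_word h00_word u v w⟩

/-- the noncommutative root space Poisson bracket continual Lie
algebra, identity (6). On nonempty basis words:
`K₊(φ, ψ) = −i·(∂^{⊗ord} φ) ⊗ ψ`, `K₋(φ, ψ) = i·ψ ⊗ (∂^{⊗ord} φ)`,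
`K₀₀(φ, ψ) = −i·(φ ⊗ ψ − ψ ⊗ φ)`. -/
theorem ncrs_poisson_6
    (E : Type*) [Ring E] [Algebra ℂ E] (d : E →ₗ[ℂ] E)
    (Kp Km K00 : MonoidAlgebra ℂ (FreeMonoid E) →ₗ[ℂ]
         MonoidAlgebra ℂ (FreeMonoid E) →ₗ[ℂ] MonoidAlgebra ℂ (FreeMonoid E))
    (hp : ∀ φ ψ : List E, φ ≠ [] → ψ ≠ [] →
      Kp (bw φ) (bw ψ) = (-Complex.I) • bw (φ.map ⇑d ++ ψ))
    (hm : ∀ φ ψ : List E, φ ≠ [] → ψ ≠ [] →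
      Km (bw φ) (bw ψ) = Complex.I • bw (ψ ++ φ.map ⇑d))
    (h00 : ∀ φ ψ : List E, φ ≠ [] → ψ ≠ [] →
      K00 (bw φ) (bw ψ) = (-Complex.I) • (bw (φ ++ ψ) - bw (ψ ++ φ)))
    (hz : ∀ x, Kp (bw ([] : List E)) x = 0 ∧ Kp x (bw ([] : List E)) = 0 ∧
               Km (bw ([] : List E)) x = 0 ∧ Km x (bw ([] : List E)) = 0 ∧
               K00 (bw ([] : List E)) x = 0 ∧ K00 x (bw ([] : List E)) = 0) :
    ∀ φ ψ χ : List E, φ ≠ [] → ψ ≠ [] → χ ≠ [] →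
      Kp (K00 (bw φ) (bw ψ)) (bw χ) =
        Kp (bw φ) (Kp (bw ψ) (bw χ)) - Kp (bw ψ) (Kp (bw φ) (bw χ)) ∧
      Km (K00 (bw φ) (bw ψ)) (bw χ) =
        Km (bw φ) (Km (bw ψ) (bw χ)) - Km (bw ψ) (Km (bw φ) (bw χ)) := by
  exact ncrs_poisson_6_general d Complex.I Kp Km K00 hp hm h00
end

section
/- (Noncommutative root space Poisson-type bracket algebra, identity (6).) Define bilinear mappings on ℰ by K₊(φ, ψ) = −i·φ ˆ (D₁ ψ), K₋(φ, ψ) = i·ψ ˆ (D₁ φ), and K₀₀(φ, ψ) = K₊(φ, ψ) + K₋(φ, ψ) on nonempty words. Then for all words φ, ψ over E of tensor order at least 2 and every nonempty word χ over E: K₊(K₀₀(φ, ψ), χ) = K₊(φ, K₊(ψ, χ)) − K₊(ψ, K₊(φ, χ)), and the same identity with K₊ replaced by K₋ throughout. -/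
/-!
Both `K₊` and the opposite of `K₋` are scalar multiples of the product `(u, v) ↦ u ˆ D₁ v`.
Gluing is associative, and when `v` has order at least two, gluing a word to the end of `v` does
not touch its first entry, so `D₁ (v ˆ w) = D₁ v ˆ w`. The product is therefore associative
whenever its middle factor has order at least two. On such words `K₀₀` is the commutator of `K₊`,
and also that of `K₋`, and a commutator in an associative product acts as the commutator of the
multiplication operators.
-/

section Words

variable {E : Type*}

theorem applyAt_zero (f : E → E) (w : List E) : applyAt f 0 w = w := by
  cases w <;> rfl

theorem applyAt_ne_nil (f : E → E) (k : ℕ) {w : List E} (hw : w ≠ []) : applyAt f k w ≠ [] := by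
  obtain ⟨a, as, rfl⟩ := List.exists_cons_of_ne_nil hw
  rcases k with _ | _ | k <;> simp [applyAt]

variable [Mul E]

theorem glue_cons_of_ne_nil (a : E) {v : List E} (hv : v ≠ []) (w : List E) :
    glue (a :: v) w = a :: glue v w := by
  obtain ⟨b, bs, rfl⟩ := List.exists_cons_of_ne_nil hv
  rw [glue]

theorem glue_ne_nil_of_left {v : List E} (hv : v ≠ []) (w : List E) : glue v w ≠ [] := by
  match v, w with
  | [_], [] | [_], _ :: _ | _ :: _ :: _, _ => simp [glue]

theorem applyAt_glue_of_lt_length (f : E → E) {k : ℕ} {v : List E} (hk : k < v.length)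
    (w : List E) : applyAt f k (glue v w) = glue (applyAt f k v) w := by
  induction v generalizing k with
  | nil => simp at hk
  | cons a v ih =>
    match k with
    | 0 => simp only [applyAt_zero]
    | 1 =>
      have hv : v ≠ [] := List.ne_nil_of_length_pos (by simpa using hk)
      simp only [glue_cons_of_ne_nil _ hv, applyAt]
    | k + 2 =>
      have hk' : k + 1 < v.length := Nat.lt_of_succ_lt_succ hk
      have hv : v ≠ [] := List.ne_nil_of_length_pos (by lia)
      simp only [glue_cons_of_ne_nil _ hv, glue_cons_of_ne_nil _ (applyAt_ne_nil f _ hv), applyAt,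
        ih hk']

end Words

theorem glue_assoc_s8 {E : Type*} [Semigroup E] (u v w : List E) :
    glue (glue u v) w = glue u (glue v w) := by
  match u, v, w with
  | [], _, _ | [_], [], [] | [_], [], _ :: _ | [_], [_], [] | [_], _ :: _ :: _, _ => simp [glue]
  | [_], [_], _ :: _ => simp [glue, mul_assoc]
  | a :: b :: u, v, w =>
    have hne : glue (b :: u) v ≠ [] := glue_ne_nil_of_left (by simp) v
    rw [glue, glue_cons_of_ne_nil _ hne, glue_assoc_s8 (b :: u) v w, glue]

theorem glue_glue_applyAt {E : Type*} [Semigroup E] (f : E → E) {k : ℕ} (u : List E) {v : List E}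
    (hk : k < v.length) (w : List E) :
    glue (glue u (applyAt f k v)) w = glue u (applyAt f k (glue v w)) := by
  rw [glue_assoc_s8, applyAt_glue_of_lt_length f hk]

theorem bilin_assoc_of_eq_smul_glue {R M E : Type*} [CommSemiring R] [AddCommMonoid M] [Module R M]
    [Semigroup E] {b : List E → M} {f : E → E} {c : R} {K : M →ₗ[R] M →ₗ[R] M}
    (hK : ∀ u v : List E, u ≠ [] → v ≠ [] → K (b u) (b v) = c • b (glue u (applyAt f 1 v)))
    {u v w : List E} (hu : u ≠ []) (hv : 1 < v.length) (hw : w ≠ []) :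
    K (K (b u) (b v)) (b w) = K (b u) (K (b v) (b w)) := by
  have hv' : v ≠ [] := List.ne_nil_of_length_pos (by lia)
  calc K (K (b u) (b v)) (b w)
      = c • c • b (glue (glue u (applyAt f 1 v)) (applyAt f 1 w)) := by
        rw [hK u v hu hv', map_smul, LinearMap.smul_apply,
          hK _ w (glue_ne_nil_of_left hu _) hw]
    _ = c • c • b (glue u (applyAt f 1 (glue v (applyAt f 1 w)))) := by
        rw [glue_glue_applyAt f u hv]
    _ = K (b u) (K (b v) (b w)) := by
        rw [hK v w hv' hw, map_smul, hK u _ hu (glue_ne_nil_of_left hv' _)]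

theorem bilin_commutator_apply {R M : Type*} [CommSemiring R] [AddCommGroup M] [Module R M]
    {K : M →ₗ[R] M →ₗ[R] M} {x y z : M} (hxy : K (K x y) z = K x (K y z))
    (hyx : K (K y x) z = K y (K x z)) :
    K (K x y - K y x) z = K x (K y z) - K y (K x z) := by
  rw [map_sub, LinearMap.sub_apply, hxy, hyx]

theorem ncrs_poisson_type_6_general {R M E : Type*} [CommRing R] [AddCommGroup M] [Module R M]
    [Semigroup E] {b : List E → M} {f : E → E} {c : R} {Kp Km : M →ₗ[R] M →ₗ[R] M}
    (hp : ∀ φ ψ : List E, φ ≠ [] → ψ ≠ [] →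
      Kp (b φ) (b ψ) = (-c) • b (glue φ (applyAt f 1 ψ)))
    (hm : ∀ φ ψ : List E, φ ≠ [] → ψ ≠ [] →
      Km (b φ) (b ψ) = c • b (glue ψ (applyAt f 1 φ)))
    {φ ψ χ : List E} (hφ : 2 ≤ φ.length) (hψ : 2 ≤ ψ.length) (hχ : χ ≠ []) :
    Kp (Kp (b φ) (b ψ) + Km (b φ) (b ψ)) (b χ) =
        Kp (b φ) (Kp (b ψ) (b χ)) - Kp (b ψ) (Kp (b φ) (b χ)) ∧
      Km (Kp (b φ) (b ψ) + Km (b φ) (b ψ)) (b χ) =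
        Km (b φ) (Km (b ψ) (b χ)) - Km (b ψ) (Km (b φ) (b χ)) := by
  have hφ' : φ ≠ [] := List.ne_nil_of_length_pos (by lia)
  have hψ' : ψ ≠ [] := List.ne_nil_of_length_pos (by lia)
  have hKm_flip : ∀ u v : List E, u ≠ [] → v ≠ [] →
      Km.flip (b u) (b v) = c • b (glue u (applyAt f 1 v)) := fun u v hu hv ↦ hm v u hv hu
  have hcomm_p : Kp (b φ) (b ψ) + Km (b φ) (b ψ) = Kp (b φ) (b ψ) - Kp (b ψ) (b φ) := by
    rw [hm φ ψ hφ' hψ', hp ψ φ hψ' hφ', neg_smul, sub_neg_eq_add]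
  have hcomm_m : Kp (b φ) (b ψ) + Km (b φ) (b ψ) = Km (b φ) (b ψ) - Km (b ψ) (b φ) := by
    rw [hp φ ψ hφ' hψ', hm ψ φ hψ' hφ', neg_smul, neg_add_eq_sub]
  constructor
  · rw [hcomm_p]
    exact bilin_commutator_apply (bilin_assoc_of_eq_smul_glue hp hφ' hψ hχ)
      (bilin_assoc_of_eq_smul_glue hp hψ' hφ hχ)
  · rw [hcomm_m]
    exact bilin_commutator_apply (bilin_assoc_of_eq_smul_glue hKm_flip hχ hψ hφ').symm
      (bilin_assoc_of_eq_smul_glue hKm_flip hχ hφ hψ').symm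

/-- the noncommutative root space Poisson-type bracket algebra,
identity (6). On nonempty basis words: `K₊(φ, ψ) = −i·φ ˆ (D₁ ψ)`,
`K₋(φ, ψ) = i·ψ ˆ (D₁ φ)`, `K₀₀(φ, ψ) = K₊(φ, ψ) + K₋(φ, ψ)`. -/
theorem ncrs_poisson_type_6
    (E : Type*) [Ring E] [Algebra ℂ E] (d : E →ₗ[ℂ] E)
    (Kp Km K00 : MonoidAlgebra ℂ (FreeMonoid E) →ₗ[ℂ]
         MonoidAlgebra ℂ (FreeMonoid E) →ₗ[ℂ] MonoidAlgebra ℂ (FreeMonoid E))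
    (hp : ∀ φ ψ : List E, φ ≠ [] → ψ ≠ [] →
      Kp (bw φ) (bw ψ) = (-Complex.I) • bw (glue φ (applyAt (⇑d) 1 ψ)))
    (hm : ∀ φ ψ : List E, φ ≠ [] → ψ ≠ [] →
      Km (bw φ) (bw ψ) = Complex.I • bw (glue ψ (applyAt (⇑d) 1 φ)))
    (h00 : ∀ φ ψ : List E, φ ≠ [] → ψ ≠ [] →
      K00 (bw φ) (bw ψ) = Kp (bw φ) (bw ψ) + Km (bw φ) (bw ψ))
    (hz : ∀ x, Kp (bw ([] : List E)) x = 0 ∧ Kp x (bw ([] : List E)) = 0 ∧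
               Km (bw ([] : List E)) x = 0 ∧ Km x (bw ([] : List E)) = 0 ∧
               K00 (bw ([] : List E)) x = 0 ∧ K00 x (bw ([] : List E)) = 0) :
    ∀ φ ψ χ : List E, 2 ≤ φ.length → 2 ≤ ψ.length → χ ≠ [] →
      Kp (K00 (bw φ) (bw ψ)) (bw χ) =
        Kp (bw φ) (Kp (bw ψ) (bw χ)) - Kp (bw ψ) (Kp (bw φ) (bw χ)) ∧
      Km (K00 (bw φ) (bw ψ)) (bw χ) =
        Km (bw φ) (Km (bw ψ) (bw χ)) - Km (bw ψ) (Km (bw φ) (bw χ)) := by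
  intro φ ψ χ hφ hψ hχ
  rw [h00 φ ψ (List.ne_nil_of_length_pos (by lia)) (List.ne_nil_of_length_pos (by lia))]
  exact ncrs_poisson_type_6_general hp hm hφ hψ hχ
end

section
/- (Noncommutative root space integral mapping algebra, identity (6).) Define bilinear mappings on ℰ by K₊(φ, ψ) = −i·( (∂^{⊗ord} φ) ⊗ ψ + ψ ⊗ (∂^{⊗ord}(P φ)) ), K₋(φ, ψ) = i·( (∂^{⊗ord}(P φ)) ⊗ ψ + ψ ⊗ (∂^{⊗ord} φ) ), and K₀₀(φ, ψ) = −i·(φ ⊗ ψ − ψ ⊗ φ) on nonempty words. Then for all nonempty words φ, ψ, χ over E: K₊(K₀₀(φ, ψ), χ) = K₊(φ, K₊(ψ, χ)) − K₊(ψ, K₊(φ, χ)), and the same identity with K₊ replaced by K₋ throughout. -/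
/-!
The operators `T(a, b) : z ↦ a z + z b` on an associative ring satisfy
`[T(a, b), T(a', b')] = T([a, a'], [b', b])`. Hence `x ↦ T(l x, r x)` represents a bracket `B`
as soon as `l` carries `B` to the commutator and `r` carries it to the opposite commutator.
Entrywise `∂` is multiplicative on words and `∂ ∘ P` is antimultiplicative. Since
`K₀₀ = -i [·, ·]`, the rescalings `-i ∂` and `-i ∂ P` can serve as `l` and `r`, which gives `K₊`,
and so can `i ∂ P` and `i ∂`, which gives `K₋`: exchanging the roles of `∂` and `∂ P` costs a sign,
which the change from `-i` to `i` compensates.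
-/

section MulAddMul

variable {A : Type*} [NonUnitalRing A]

/-- The operator `z ↦ a z + z b` of simultaneous left and right multiplication, the common shape
of `K₊(φ, ·)` and `K₋(φ, ·)`. -/
def mulAddMul (a b z : A) : A :=
  a * z + z * b

theorem mulAddMul_lie (a b a' b' z : A) :
    mulAddMul ⁅a, a'⁆ ⁅b', b⁆ z =
      mulAddMul a b (mulAddMul a' b' z) - mulAddMul a' b' (mulAddMul a b z) := by
  simp only [mulAddMul, Ring.lie_def]
  noncomm_ring

theorem apply_bracket_eq_sub_of_eq_mulAddMul {K B : A → A → A} {l r : A → A} {S : Set A}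
    (hK : ∀ x ∈ S, ∀ z ∈ S, K x z = mulAddMul (l x) (r x) z)
    (hS : ∀ x ∈ S, ∀ z ∈ S, mulAddMul (l x) (r x) z ∈ S)
    (hB : ∀ x ∈ S, ∀ y ∈ S, B x y ∈ S)
    (hl : ∀ x ∈ S, ∀ y ∈ S, l (B x y) = ⁅l x, l y⁆)
    (hr : ∀ x ∈ S, ∀ y ∈ S, r (B x y) = ⁅r y, r x⁆)
    {x y z : A} (hx : x ∈ S) (hy : y ∈ S) (hz : z ∈ S) :
    K (B x y) z = K x (K y z) - K y (K x z) := by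
  rw [hK _ (hB x hx y hy) z hz, hl x hx y hy, hr x hx y hy, mulAddMul_lie, hK y hy z hz,
    hK x hx z hz, hK x hx _ (hS y hy z hz), hK y hy _ (hS x hx z hz)]

end MulAddMul

section WordAlgebra

open MonoidAlgebra MulOpposite

attribute [local instance] LieRing.ofAssociativeRing

variable {R E F : Type*} [CommRing R]

variable (R E) in
/-- The span of the nonempty words: the part of the root space on which formulas on pairs of
nonempty words determine a bilinear map. -/
noncomputable def nonemptyWordSpan : Submodule R (MonoidAlgebra R (FreeMonoid E)) :=
  Submodule.span R (of R (FreeMonoid E) '' {w | w ≠ 1})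

theorem of_mem_nonemptyWordSpan {w : FreeMonoid E} (hw : w ≠ 1) :
    of R (FreeMonoid E) w ∈ nonemptyWordSpan R E :=
  Submodule.subset_span (Set.mem_image_of_mem _ hw)

theorem mul_mem_nonemptyWordSpan_left (a : MonoidAlgebra R (FreeMonoid E))
    {x : MonoidAlgebra R (FreeMonoid E)} (hx : x ∈ nonemptyWordSpan R E) :
    a * x ∈ nonemptyWordSpan R E := by
  suffices nonemptyWordSpan R E ≤ (nonemptyWordSpan R E).comap (LinearMap.mulLeft R a) from this hx
  refine Submodule.span_le.2 ?_
  rintro _ ⟨w, hw, rfl⟩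
  change a * of R _ w ∈ nonemptyWordSpan R E
  induction a using MonoidAlgebra.induction_on with
  | of v =>
    rw [← map_mul]
    exact of_mem_nonemptyWordSpan fun h => hw (eq_one_of_mul_left' h)
  | add a b ha hb => rw [add_mul]; exact add_mem ha hb
  | smul c a ha => rw [smul_mul_assoc]; exact Submodule.smul_mem _ c ha

theorem mul_mem_nonemptyWordSpan_right (a : MonoidAlgebra R (FreeMonoid E))
    {x : MonoidAlgebra R (FreeMonoid E)} (hx : x ∈ nonemptyWordSpan R E) :
    x * a ∈ nonemptyWordSpan R E := by
  suffices nonemptyWordSpan R E ≤ (nonemptyWordSpan R E).comap (LinearMap.mulRight R a) from this hx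
  refine Submodule.span_le.2 ?_
  rintro _ ⟨w, hw, rfl⟩
  change of R _ w * a ∈ nonemptyWordSpan R E
  induction a using MonoidAlgebra.induction_on with
  | of v =>
    rw [← map_mul]
    exact of_mem_nonemptyWordSpan fun h => hw (eq_one_of_mul_right' h)
  | add a b ha hb => rw [mul_add]; exact add_mem ha hb
  | smul c a ha => rw [mul_smul_comm]; exact Submodule.smul_mem _ c ha

theorem mulAddMul_mem_nonemptyWordSpan (a b : MonoidAlgebra R (FreeMonoid E))
    {x : MonoidAlgebra R (FreeMonoid E)} (hx : x ∈ nonemptyWordSpan R E) :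
    mulAddMul a b x ∈ nonemptyWordSpan R E :=
  add_mem (mul_mem_nonemptyWordSpan_left a hx) (mul_mem_nonemptyWordSpan_right b hx)

theorem lie_mem_nonemptyWordSpan (x : MonoidAlgebra R (FreeMonoid E))
    {y : MonoidAlgebra R (FreeMonoid E)} (hy : y ∈ nonemptyWordSpan R E) :
    ⁅x, y⁆ ∈ nonemptyWordSpan R E :=
  sub_mem (mul_mem_nonemptyWordSpan_left x hy) (mul_mem_nonemptyWordSpan_right x hy)

theorem eq_on_nonemptyWordSpan_of_eq_on_words {M : Type*} [AddCommMonoid M] [Module R M]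
    {f g : MonoidAlgebra R (FreeMonoid E) →ₗ[R] MonoidAlgebra R (FreeMonoid E) →ₗ[R] M}
    (h : ∀ v w : FreeMonoid E, v ≠ 1 → w ≠ 1 → f (of R _ v) (of R _ w) = g (of R _ v) (of R _ w)) :
    ∀ x ∈ nonemptyWordSpan R E, ∀ y ∈ nonemptyWordSpan R E, f x y = g x y := by
  intro x hx y hy
  induction hx, hy using Submodule.span_induction₂ with
  | mem_mem x y hx hy =>
    obtain ⟨v, hv, rfl⟩ := hx
    obtain ⟨w, hw, rfl⟩ := hy
    exact h v w hv hw
  | _ => simp_all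

variable (R) in
/-- The linear extension of `∂^{⊗ord}` to the root space, for an arbitrary map `d` of letters. -/
noncomputable def mapLetters (d : E → F) :
    MonoidAlgebra R (FreeMonoid E) →ₐ[R] MonoidAlgebra R (FreeMonoid F) :=
  mapDomainAlgHom R R (FreeMonoid.map d)

variable (R) in
/-- The linear extension of `∂^{⊗ord} ∘ P` to the root space, for an arbitrary map `d` of letters.
It is built as an algebra homomorphism into the opposite algebra. -/
noncomputable def reverseMapLetters (d : E → F) :
    MonoidAlgebra R (FreeMonoid E) →ₗ[R] MonoidAlgebra R (FreeMonoid F) :=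
  (opLinearEquiv R).symm.toLinearMap ∘ₗ
    (lift R _ _ (FreeMonoid.lift fun e => op (of R _ (FreeMonoid.of (d e))))).toLinearMap

theorem mapLetters_of (d : E → F) (w : FreeMonoid E) :
    mapLetters R d (of R _ w) = of R _ (FreeMonoid.map d w) := by
  simp [mapLetters]

theorem mapLetters_lie (d : E → F) (x y : MonoidAlgebra R (FreeMonoid E)) :
    mapLetters R d ⁅x, y⁆ = ⁅mapLetters R d x, mapLetters R d y⁆ := by
  simp only [Ring.lie_def, map_sub, map_mul]

theorem reverseMapLetters_mul (d : E → F) (x y : MonoidAlgebra R (FreeMonoid E)) :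
    reverseMapLetters R d (x * y) = reverseMapLetters R d y * reverseMapLetters R d x := by
  simp [reverseMapLetters]

theorem reverseMapLetters_of (d : E → F) (w : FreeMonoid E) :
    reverseMapLetters R d (of R _ w) = of R _ (FreeMonoid.map d w.reverse) := by
  induction w using FreeMonoid.inductionOn' with
  | one =>
    change reverseMapLetters R d (of R _ 1) = of R _ 1
    simp [reverseMapLetters, one_def]
  | of_mul e w ih =>
    have h_letter : reverseMapLetters R d (of R _ (FreeMonoid.of e)) =
        of R _ (FreeMonoid.of (d e)) := by simp [reverseMapLetters]
    rw [map_mul, reverseMapLetters_mul, ih, h_letter, FreeMonoid.reverse_mul,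
      FreeMonoid.reverse_of, map_mul, map_mul, FreeMonoid.map_of]

theorem reverseMapLetters_lie (d : E → F) (x y : MonoidAlgebra R (FreeMonoid E)) :
    reverseMapLetters R d ⁅x, y⁆ = ⁅reverseMapLetters R d y, reverseMapLetters R d x⁆ := by
  simp only [Ring.lie_def, map_sub, reverseMapLetters_mul]

theorem apply_bracket_eq_sub_of_words
    {K B : MonoidAlgebra R (FreeMonoid E) →ₗ[R]
      MonoidAlgebra R (FreeMonoid E) →ₗ[R] MonoidAlgebra R (FreeMonoid E)}
    {l r : MonoidAlgebra R (FreeMonoid E) →ₗ[R] MonoidAlgebra R (FreeMonoid E)} {b : R}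
    (hK : ∀ v w : FreeMonoid E, v ≠ 1 → w ≠ 1 →
      K (of R _ v) (of R _ w) = mulAddMul (l (of R _ v)) (r (of R _ v)) (of R _ w))
    (hB : ∀ v w : FreeMonoid E, v ≠ 1 → w ≠ 1 →
      B (of R _ v) (of R _ w) = b • ⁅of R _ v, of R _ w⁆)
    (hl : ∀ x y, b • l ⁅x, y⁆ = ⁅l x, l y⁆) (hr : ∀ x y, b • r ⁅x, y⁆ = ⁅r y, r x⁆)
    {x y z : MonoidAlgebra R (FreeMonoid E)} (hx : x ∈ nonemptyWordSpan R E)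
    (hy : y ∈ nonemptyWordSpan R E) (hz : z ∈ nonemptyWordSpan R E) :
    K (B x y) z = K x (K y z) - K y (K x z) := by
  have hK_span : ∀ x ∈ nonemptyWordSpan R E, ∀ z ∈ nonemptyWordSpan R E,
      K x z = mulAddMul (l x) (r x) z :=
    eq_on_nonemptyWordSpan_of_eq_on_words
      (g := LinearMap.mul R _ ∘ₗ l + (LinearMap.mul R _).flip ∘ₗ r) hK
  have hB_span : ∀ x ∈ nonemptyWordSpan R E, ∀ y ∈ nonemptyWordSpan R E, B x y = b • ⁅x, y⁆ :=
    eq_on_nonemptyWordSpan_of_eq_on_words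
      (g := b • (LieAlgebra.ad R (MonoidAlgebra R (FreeMonoid E))).toLinearMap) hB
  refine apply_bracket_eq_sub_of_eq_mulAddMul (K := fun x => K x) (B := fun x => B x)
    (S := nonemptyWordSpan R E) hK_span ?_ ?_ ?_ ?_ hx hy hz
  · exact fun x _ z hz => mulAddMul_mem_nonemptyWordSpan (l x) (r x) hz
  · intro x hx y hy
    rw [hB_span x hx y hy]
    exact Submodule.smul_mem _ b (lie_mem_nonemptyWordSpan x hy)
  · intro x hx y hy
    rw [hB_span x hx y hy, map_smul, hl]
  · intro x hx y hy
    rw [hB_span x hx y hy, map_smul, hr]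

theorem ncrs_integral_6_general (c : R) (d : E → E)
    (Kp Km K00 : MonoidAlgebra R (FreeMonoid E) →ₗ[R]
      MonoidAlgebra R (FreeMonoid E) →ₗ[R] MonoidAlgebra R (FreeMonoid E))
    (hp : ∀ v w : FreeMonoid E, v ≠ 1 → w ≠ 1 →
      Kp (of R _ v) (of R _ w) =
        (-c) • (of R _ (FreeMonoid.map d v * w) + of R _ (w * FreeMonoid.map d v.reverse)))
    (hm : ∀ v w : FreeMonoid E, v ≠ 1 → w ≠ 1 →
      Km (of R _ v) (of R _ w) =
        c • (of R _ (FreeMonoid.map d v.reverse * w) + of R _ (w * FreeMonoid.map d v)))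
    (h00 : ∀ v w : FreeMonoid E, v ≠ 1 → w ≠ 1 →
      K00 (of R _ v) (of R _ w) = (-c) • (of R _ (v * w) - of R _ (w * v)))
    {x y z : MonoidAlgebra R (FreeMonoid E)} (hx : x ∈ nonemptyWordSpan R E)
    (hy : y ∈ nonemptyWordSpan R E) (hz : z ∈ nonemptyWordSpan R E) :
    Kp (K00 x y) z = Kp x (Kp y z) - Kp y (Kp x z) ∧
      Km (K00 x y) z = Km x (Km y z) - Km y (Km x z) := by
  have h00_lie : ∀ v w : FreeMonoid E, v ≠ 1 → w ≠ 1 →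
      K00 (of R _ v) (of R _ w) = (-c) • ⁅of R _ v, of R _ w⁆ := by
    simpa only [map_mul, Ring.lie_def] using h00
  constructor
  · refine apply_bracket_eq_sub_of_words (l := (-c) • (mapLetters R d).toLinearMap)
      (r := (-c) • reverseMapLetters R d) ?_ h00_lie ?_ ?_ hx hy hz
    · intro v w hv hw
      simp [hp v w hv hw, mulAddMul, mapLetters_of, reverseMapLetters_of, -of_apply]
    · simp [mapLetters_lie]
    · simp [reverseMapLetters_lie]
  · refine apply_bracket_eq_sub_of_words (l := c • reverseMapLetters R d)
      (r := c • (mapLetters R d).toLinearMap) ?_ h00_lie ?_ ?_ hx hy hz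
    · intro v w hv hw
      simp [hm v w hv hw, mulAddMul, mapLetters_of, reverseMapLetters_of, -of_apply]
    · simp [reverseMapLetters_lie, ← smul_neg]
    · simp [mapLetters_lie, ← smul_neg]

end WordAlgebra

/-- the noncommutative root space integral mapping continual Lie
algebra, identity (6). On nonempty basis words:
`K₊(φ, ψ) = −i·( (∂^{⊗ord} φ) ⊗ ψ + ψ ⊗ (∂^{⊗ord}(P φ)) )`,
`K₋(φ, ψ) = i·( (∂^{⊗ord}(P φ)) ⊗ ψ + ψ ⊗ (∂^{⊗ord} φ) )`,
`K₀₀(φ, ψ) = −i·(φ ⊗ ψ − ψ ⊗ φ)`, where `P` reverses the word. -/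
theorem ncrs_integral_6
    (E : Type*) [Ring E] [Algebra ℂ E] (d : E →ₗ[ℂ] E)
    (Kp Km K00 : MonoidAlgebra ℂ (FreeMonoid E) →ₗ[ℂ]
         MonoidAlgebra ℂ (FreeMonoid E) →ₗ[ℂ] MonoidAlgebra ℂ (FreeMonoid E))
    (hp : ∀ φ ψ : List E, φ ≠ [] → ψ ≠ [] →
      Kp (bw φ) (bw ψ) =
        (-Complex.I) • (bw (φ.map ⇑d ++ ψ) + bw (ψ ++ φ.reverse.map ⇑d)))
    (hm : ∀ φ ψ : List E, φ ≠ [] → ψ ≠ [] →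
      Km (bw φ) (bw ψ) =
        Complex.I • (bw (φ.reverse.map ⇑d ++ ψ) + bw (ψ ++ φ.map ⇑d)))
    (h00 : ∀ φ ψ : List E, φ ≠ [] → ψ ≠ [] →
      K00 (bw φ) (bw ψ) = (-Complex.I) • (bw (φ ++ ψ) - bw (ψ ++ φ)))
    (hz : ∀ x, Kp (bw ([] : List E)) x = 0 ∧ Kp x (bw ([] : List E)) = 0 ∧
               Km (bw ([] : List E)) x = 0 ∧ Km x (bw ([] : List E)) = 0 ∧
               K00 (bw ([] : List E)) x = 0 ∧ K00 x (bw ([] : List E)) = 0) :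
    ∀ φ ψ χ : List E, φ ≠ [] → ψ ≠ [] → χ ≠ [] →
      Kp (K00 (bw φ) (bw ψ)) (bw χ) =
        Kp (bw φ) (Kp (bw ψ) (bw χ)) - Kp (bw ψ) (Kp (bw φ) (bw χ)) ∧
      Km (K00 (bw φ) (bw ψ)) (bw χ) =
        Km (bw φ) (Km (bw ψ) (bw χ)) - Km (bw ψ) (Km (bw φ) (bw χ)) := by
  intro φ ψ χ hφ hψ hχ
  exact ncrs_integral_6_general Complex.I d Kp Km K00 hp hm h00 (of_mem_nonemptyWordSpan hφ)
    (of_mem_nonemptyWordSpan hψ) (of_mem_nonemptyWordSpan hχ)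
end

section
/- (Noncommutative root space integral mapping algebra, identity (7).) Assume ∂ is a ℂ-linear automorphism of E with inverse ∂⁻¹. Define bilinear mappings on ℰ by K₊(φ, ψ) = −i·( (∂^{⊗ord} φ) ⊗ ψ + ψ ⊗ (∂^{⊗ord}(P φ)) ), K₋(φ, ψ) = i·( (∂^{⊗ord}(P φ)) ⊗ ψ + ψ ⊗ (∂^{⊗ord} φ) ), K₀₀(φ, ψ) = −i·(φ ⊗ ψ − ψ ⊗ φ), and K₀(φ, ψ) = −i·(∂⁻¹)^{⊗ord}(φ ⊗ ψ) on nonempty words. Then for all nonempty words φ, ψ, χ over E: K₀₀(ψ, K₀(φ, χ)) = K₀(K₊(ψ, φ), χ) + K₀(φ, K₋(ψ, χ)) in ℰ. -/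
/-!
On nonempty words `K₀` is `-i · D(· ⊗ ·)`, where `D = (∂⁻¹)^{⊗ord}` is an algebra endomorphism of
the root space. Hence every term of the identity is `± i²` times a value of `D`, and with
`x = ∂^{⊗ord} ψ` and `y = ∂^{⊗ord} (P ψ)` it is the image under `D` of
`x (φ χ) - (φ χ) x = (x φ + φ y) χ - φ (y χ + χ x)`, in which the terms `φ y χ` cancel.
-/

theorem commutator_mul_eq_sub {A : Type*} [NonUnitalRing A] (x y a b : A) :
    x * (a * b) - a * b * x = (x * a + a * y) * b - a * (y * b + b * x) := by
  noncomm_ring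

theorem freeMonoid_map_ne_one {α β : Type*} (f : α → β) {w : FreeMonoid α} (hw : w ≠ 1) :
    FreeMonoid.map f w ≠ 1 :=
  mt List.map_eq_nil_iff.mp hw

theorem leftInverse_freeMonoid_map {α β : Type*} {f : α → β} {g : β → α}
    (h : Function.LeftInverse g f) :
    Function.LeftInverse (FreeMonoid.map g) (FreeMonoid.map f) := fun w ↦ by
  rw [FreeMonoid.map_map, h.comp_eq_id, FreeMonoid.map_id, MonoidHom.id_apply]

open MonoidAlgebra in
theorem ncrs_integral_7_general {R E : Type*} [CommRing R] {d e : E → E}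
    (hed : Function.LeftInverse e d) (P : FreeMonoid E → FreeMonoid E) (c : R)
    {Kp Km K00 K0 : MonoidAlgebra R (FreeMonoid E) →ₗ[R]
      MonoidAlgebra R (FreeMonoid E) →ₗ[R] MonoidAlgebra R (FreeMonoid E)}
    (hp : ∀ φ ψ : FreeMonoid E, φ ≠ 1 → ψ ≠ 1 →
      Kp (of R _ φ) (of R _ ψ) =
        (-c) • (of R _ (.map d φ * ψ) + of R _ (ψ * .map d (P φ))))
    (hm : ∀ φ ψ : FreeMonoid E, φ ≠ 1 → ψ ≠ 1 →
      Km (of R _ φ) (of R _ ψ) =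
        c • (of R _ (.map d (P φ) * ψ) + of R _ (ψ * .map d φ)))
    (h00 : ∀ φ ψ : FreeMonoid E, φ ≠ 1 → ψ ≠ 1 →
      K00 (of R _ φ) (of R _ ψ) = (-c) • (of R _ (φ * ψ) - of R _ (ψ * φ)))
    (h0 : ∀ φ ψ : FreeMonoid E, φ ≠ 1 → ψ ≠ 1 →
      K0 (of R _ φ) (of R _ ψ) = (-c) • of R _ (.map e (φ * ψ)))
    (φ ψ χ : FreeMonoid E) (hφ : φ ≠ 1) (hψ : ψ ≠ 1) (hχ : χ ≠ 1) :
    K00 (of R _ ψ) (K0 (of R _ φ) (of R _ χ)) =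
      K0 (Kp (of R _ ψ) (of R _ φ)) (of R _ χ) +
        K0 (of R _ φ) (Km (of R _ ψ) (of R _ χ)) := by
  let D := mapDomainAlgHom R R (FreeMonoid.map e)
  let a := of R _ φ
  let b := of R _ χ
  let x := of R _ (FreeMonoid.map d ψ)
  let y := of R _ (FreeMonoid.map d (P ψ))
  have D_of (w : FreeMonoid E) : D (of R _ w) = of R _ (.map e w) := mapDomain_single
  have D_x : D x = of R _ ψ := by rw [D_of, leftInverse_freeMonoid_map hed]
  have K0_of {u v : FreeMonoid E} (hu : u ≠ 1) (hv : v ≠ 1) :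
      K0 (of R _ u) (of R _ v) = (-c) • D (of R _ (u * v)) := by
    rw [h0 u v hu hv, D_of]
  have K00_K0 : K00 (of R _ ψ) (K0 a b) = c ^ 2 • D (x * (a * b) - a * b * x) := by
    have hφχ : FreeMonoid.map e (φ * χ) ≠ 1 :=
      freeMonoid_map_ne_one e (mul_ne_one'.mpr (.inl hφ))
    rw [K0_of hφ hχ, map_smul, D_of, h00 ψ _ hψ hφχ, smul_smul, neg_mul_neg, ← pow_two]
    simp only [map_sub, map_mul, D_x, D_of, a, b]
  have K0_Kp : K0 (Kp (of R _ ψ) a) b = c ^ 2 • D ((x * a + a * y) * b) := by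
    rw [hp ψ φ hψ hφ, map_smul, map_add, LinearMap.smul_apply, LinearMap.add_apply,
      K0_of (mul_ne_one'.mpr (.inr hφ)) hχ, K0_of (mul_ne_one'.mpr (.inl hφ)) hχ, ← smul_add,
      smul_smul, neg_mul_neg, ← pow_two]
    simp only [map_add, map_mul, add_mul, a, b, x, y]
  have K0_Km : K0 a (Km (of R _ ψ) b) = -(c ^ 2 • D (a * (y * b + b * x))) := by
    rw [hm ψ χ hψ hχ, map_smul, map_add, K0_of hφ (mul_ne_one'.mpr (.inr hχ)),
      K0_of hφ (mul_ne_one'.mpr (.inl hχ)), ← smul_add, smul_smul, mul_neg, neg_smul, ← pow_two]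
    simp only [map_add, map_mul, mul_add, a, b, x, y]
  rw [K00_K0, K0_Kp, K0_Km, commutator_mul_eq_sub x y, map_sub, smul_sub, sub_eq_add_neg]

/-- the noncommutative root space integral mapping continual Lie
algebra, identity (7). `∂` is a `ℂ`-linear automorphism of `E` with inverse
`∂⁻¹`; on nonempty basis words `K₀(φ, ψ) = −i·(∂⁻¹)^{⊗ord}(φ ⊗ ψ)`. -/
theorem ncrs_integral_7
    (E : Type*) [Ring E] [Algebra ℂ E] (d : E ≃ₗ[ℂ] E)
    (Kp Km K00 K0 : MonoidAlgebra ℂ (FreeMonoid E) →ₗ[ℂ]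
         MonoidAlgebra ℂ (FreeMonoid E) →ₗ[ℂ] MonoidAlgebra ℂ (FreeMonoid E))
    (hp : ∀ φ ψ : List E, φ ≠ [] → ψ ≠ [] →
      Kp (bw φ) (bw ψ) =
        (-Complex.I) • (bw (φ.map ⇑d ++ ψ) + bw (ψ ++ φ.reverse.map ⇑d)))
    (hm : ∀ φ ψ : List E, φ ≠ [] → ψ ≠ [] →
      Km (bw φ) (bw ψ) =
        Complex.I • (bw (φ.reverse.map ⇑d ++ ψ) + bw (ψ ++ φ.map ⇑d)))
    (h00 : ∀ φ ψ : List E, φ ≠ [] → ψ ≠ [] →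
      K00 (bw φ) (bw ψ) = (-Complex.I) • (bw (φ ++ ψ) - bw (ψ ++ φ)))
    (h0 : ∀ φ ψ : List E, φ ≠ [] → ψ ≠ [] →
      K0 (bw φ) (bw ψ) = (-Complex.I) • bw ((φ ++ ψ).map ⇑d.symm))
    (hz : ∀ x, Kp (bw ([] : List E)) x = 0 ∧ Kp x (bw ([] : List E)) = 0 ∧
               Km (bw ([] : List E)) x = 0 ∧ Km x (bw ([] : List E)) = 0 ∧
               K00 (bw ([] : List E)) x = 0 ∧ K00 x (bw ([] : List E)) = 0 ∧
               K0 (bw ([] : List E)) x = 0 ∧ K0 x (bw ([] : List E)) = 0) :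
    ∀ φ ψ χ : List E, φ ≠ [] → ψ ≠ [] → χ ≠ [] →
      K00 (bw ψ) (K0 (bw φ) (bw χ)) =
        K0 (Kp (bw ψ) (bw φ)) (bw χ) + K0 (bw φ) (Km (bw ψ) (bw χ)) := by
  exact ncrs_integral_7_general d.symm_apply_apply FreeMonoid.reverse Complex.I hp hm h00 h0
end

section
/- (Commutative Poisson bracket continual Lie algebra, full grading.) For n, m ∈ ℤ define K_{n,m}(φ, ψ) = i·( n·(∂ψ)·φ − m·(∂φ)·ψ ) for φ, ψ ∈ E. Then for all k, m, n ∈ ℤ and all φ, ψ, χ ∈ E: K_{n,m}(φ, ψ) = −K_{m,n}(ψ, φ), and K_{k,m+n}(φ, K_{m,n}(ψ, χ)) + K_{m,n+k}(ψ, K_{n,k}(χ, φ)) + K_{n,k+m}(χ, K_{k,m}(φ, ψ)) = 0. -/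
section WeightedPoissonBracket

variable {R E : Type*} [CommSemiring R] [CommRing E] [Algebra R E]

/-- The Poisson bracket `c (D₁f · D₂g - D₂f · D₁g)` of two commuting derivations, restricted to
homogeneous elements: `φ` and `ψ` are the coefficients of elements of weights `n` and `m`, on which
`D₁` acts as multiplication by the weight, and `D₂` acts on coefficients as `d`. The result is
the coefficient in weight `n + m`. -/
def weightedPoissonBracket (d : Derivation R E E) (c n m : R) (φ ψ : E) : E :=
  c • (n • (d ψ * φ) - m • (d φ * ψ))

variable (d : Derivation R E E) (c k m n : R) (φ ψ χ : E)

theorem weightedPoissonBracket_antisymm :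
    weightedPoissonBracket d c n m φ ψ = -weightedPoissonBracket d c m n ψ φ := by
  rw [weightedPoissonBracket, weightedPoissonBracket, ← smul_neg, neg_sub]

theorem map_weightedPoissonBracket :
    d (weightedPoissonBracket d c m n ψ χ) =
      c • (m • (d (d χ) * ψ + d χ * d ψ) - n • (d (d ψ) * χ + d ψ * d χ)) := by
  simp only [weightedPoissonBracket, Derivation.map_smul, map_sub, Derivation.leibniz, smul_eq_mul]
  simp only [mul_comm, add_comm]

theorem weightedPoissonBracket_weightedPoissonBracket :
    weightedPoissonBracket d c k (m + n) φ (weightedPoissonBracket d c m n ψ χ) =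
      (c * c) • ((k * m) • (φ * ψ * d (d χ)) - (n * k) • (φ * d (d ψ) * χ) -
        (m * m) • (d φ * ψ * d χ) + (n * n) • (d φ * d ψ * χ) +
        (k * m) • (φ * d ψ * d χ) - (n * k) • (φ * d ψ * d χ) -
        (m * n) • (d φ * ψ * d χ) + (m * n) • (d φ * d ψ * χ)) := by
  rw [weightedPoissonBracket, map_weightedPoissonBracket, weightedPoissonBracket]
  simp only [Algebra.smul_def, map_add, map_mul]
  ring

theorem weightedPoissonBracket_jacobi :
    weightedPoissonBracket d c k (m + n) φ (weightedPoissonBracket d c m n ψ χ) +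
      weightedPoissonBracket d c m (n + k) ψ (weightedPoissonBracket d c n k χ φ) +
      weightedPoissonBracket d c n (k + m) χ (weightedPoissonBracket d c k m φ ψ) = 0 := by
  -- Each term of one expanded double bracket cancels against a term of another one.
  simp only [weightedPoissonBracket_weightedPoissonBracket, Algebra.smul_def, map_mul]
  ring

theorem comm_poisson_full_general :
    weightedPoissonBracket d c n m φ ψ = -weightedPoissonBracket d c m n ψ φ ∧
      weightedPoissonBracket d c k (m + n) φ (weightedPoissonBracket d c m n ψ χ) +
        weightedPoissonBracket d c m (n + k) ψ (weightedPoissonBracket d c n k χ φ) +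
        weightedPoissonBracket d c n (k + m) χ (weightedPoissonBracket d c k m φ ψ) = 0 :=
  ⟨weightedPoissonBracket_antisymm d c m n φ ψ, weightedPoissonBracket_jacobi d c k m n φ ψ χ⟩

end WeightedPoissonBracket

/-- the commutative Poisson bracket continual Lie algebra, full
grading. With `K_{n,m}(φ, ψ) = i·( n·(∂ψ)·φ − m·(∂φ)·ψ )` for a derivation `∂`
of a commutative `ℂ`-algebra `E`, antisymmetry (3) and the graded Jacobi
identity (2) hold. -/
theorem comm_poisson_full
    (E : Type*) [CommRing E] [Algebra ℂ E] (d : E →ₗ[ℂ] E)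
    (hleib : ∀ a b : E, d (a * b) = d a * b + a * d b)
    (K : ℤ → ℤ → E → E → E)
    (hK : ∀ (n m : ℤ) (φ ψ : E),
      K n m φ ψ = Complex.I • (n • (d ψ * φ) - m • (d φ * ψ))) :
    ∀ (k m n : ℤ) (φ ψ χ : E),
      K n m φ ψ = - K m n ψ φ ∧
      K k (m + n) φ (K m n ψ χ) + K m (n + k) ψ (K n k χ φ) +
        K n (k + m) χ (K k m φ ψ) = 0 := by
  intro k m n φ ψ χ
  let D : Derivation ℂ E E := Derivation.mk' d fun a b ↦ by
    rw [hleib, smul_eq_mul, smul_eq_mul, mul_comm (d a), add_comm]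
  have K_eq (n m : ℤ) (φ ψ : E) : K n m φ ψ = weightedPoissonBracket D Complex.I n m φ ψ := by
    simp only [hK, weightedPoissonBracket, Int.cast_smul_eq_zsmul, D, Derivation.coe_mk']
  simpa only [K_eq, Int.cast_add] using comm_poisson_full_general D Complex.I k m n φ ψ χ
end
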